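/- There is an absolute constant C₀ > 0 with the following property. Let T > 0, let ϱ, δ, β > 0, and let (v, p, η) be a classical solution of the FSI problem on [0,T] with bounded force f and initial displacement η₀. Then for every t ∈ (0,T): (1/2)·‖v(t)‖²_{L²(Ω_η(t))} + ∫₀ᵗ ‖D(v)(s)‖²_{L²(Ω_η(s))} ds + (ϱ/2)·‖∂_tη(t)‖²_{L²(0,1)} + δ·∫₀ᵗ ‖∂_t∂ₓη(s)‖²_{L²(0,1)} ds + (β/2)·‖∂ₓ²η(t)‖²_{L²(0,1)} ≤ (β/2)·‖∂ₓ²η₀‖²_{L²(0,1)} + C₀·(sup|f|)²·vol(Ω_{η₀})·∫₀ᵗ ‖η(s)‖²_{L^∞(0,1)} ds. -/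

import Mathlib

open MeasureTheory Set intervalIntegral

noncomputable section

/-- Partial derivative in the `x` direction of a field on `ℝ×ℝ×ℝ` (variables `(x,z,t)`). -/
def dX (f : ℝ × ℝ × ℝ → ℝ) (q : ℝ × ℝ × ℝ) : ℝ := fderiv ℝ f q (1, 0, 0)

/-- Partial derivative in the `z` direction. -/
def dZ (f : ℝ × ℝ × ℝ → ℝ) (q : ℝ × ℝ × ℝ) : ℝ := fderiv ℝ f q (0, 1, 0)

/-- Partial derivative in the `t` direction. -/
def dT (f : ℝ × ℝ × ℝ → ℝ) (q : ℝ × ℝ × ℝ) : ℝ := fderiv ℝ f q (0, 0, 1)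

/-- Partial derivative in `x` of a field on `ℝ×ℝ` (variables `(x,t)`). -/
def eX (f : ℝ × ℝ → ℝ) (q : ℝ × ℝ) : ℝ := fderiv ℝ f q (1, 0)

/-- Partial derivative in `t` of a field on `ℝ×ℝ` (variables `(x,t)`). -/
def eT (f : ℝ × ℝ → ℝ) (q : ℝ × ℝ) : ℝ := fderiv ℝ f q (0, 1)

/-- A classical solution `(v, p, η)` of the nonlinear FSI problem (1.2)–(1.5) on `[0,T]`
with coefficients `ϱ, δ, β`, force `f = (f1, f2)` and initial displacement `η0`:
all fields are smooth and 1-periodic in `x`; the incompressible Navier–Stokes equations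
(with Cauchy stress `σ(v,p) = 2D(v) − p·I`) hold on the moving subgraph domain
`Ω_η(t) = {0 < z < η(x,t)}`; the visco-elastic plate equation
`ϱ ∂ₜₜη − δ ∂ₓ²∂ₜη + β ∂ₓ⁴η = −(σ(v,p)(−∂ₓη,1)ᵀ)·e_z` (right side evaluated at
`(x, η(x,t), t)`) holds; the kinematic condition `v(x,η(x,t),t) = (0, ∂ₜη)` and the
no-slip condition `v(x,0,t) = 0` hold; and the initial conditions are
`v(·,0) = 0`, `∂ₜη(·,0) = 0`, `η(·,0) = η0 > 0`. -/
structure IsClassicalFSISolution (ϱ δ β T : ℝ)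
    (f1 f2 : ℝ × ℝ × ℝ → ℝ) (v1 v2 pr : ℝ × ℝ × ℝ → ℝ)
    (η : ℝ × ℝ → ℝ) (η0 : ℝ → ℝ) : Prop where
  smooth_v1 : ContDiff ℝ (⊤ : ℕ∞) v1
  smooth_v2 : ContDiff ℝ (⊤ : ℕ∞) v2
  smooth_pr : ContDiff ℝ (⊤ : ℕ∞) pr
  smooth_η : ContDiff ℝ (⊤ : ℕ∞) η
  periodic_v1 : ∀ x z t, v1 (x + 1, z, t) = v1 (x, z, t)
  periodic_v2 : ∀ x z t, v2 (x + 1, z, t) = v2 (x, z, t)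
  periodic_pr : ∀ x z t, pr (x + 1, z, t) = pr (x, z, t)
  periodic_η : ∀ x t, η (x + 1, t) = η (x, t)
  η_pos : ∀ x, ∀ t ∈ Icc (0:ℝ) T, 0 < η (x, t)
  momentum_1 : ∀ x z t, t ∈ Ioo (0:ℝ) T → z ∈ Ioo 0 (η (x, t)) →
    dT v1 (x, z, t) + v1 (x, z, t) * dX v1 (x, z, t) + v2 (x, z, t) * dZ v1 (x, z, t)
      - (dX (fun q => 2 * dX v1 q - pr q) (x, z, t)
          + dZ (fun q => dZ v1 q + dX v2 q) (x, z, t))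
      = f1 (x, z, t)
  momentum_2 : ∀ x z t, t ∈ Ioo (0:ℝ) T → z ∈ Ioo 0 (η (x, t)) →
    dT v2 (x, z, t) + v1 (x, z, t) * dX v2 (x, z, t) + v2 (x, z, t) * dZ v2 (x, z, t)
      - (dX (fun q => dZ v1 q + dX v2 q) (x, z, t)
          + dZ (fun q => 2 * dZ v2 q - pr q) (x, z, t))
      = f2 (x, z, t)
  incompressible : ∀ x z t, t ∈ Ioo (0:ℝ) T → z ∈ Ioo 0 (η (x, t)) →
    dX v1 (x, z, t) + dZ v2 (x, z, t) = 0
  plate : ∀ x : ℝ, ∀ t ∈ Ioo (0:ℝ) T,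
    ϱ * eT (eT η) (x, t) - δ * eX (eX (eT η)) (x, t)
        + β * eX (eX (eX (eX η))) (x, t)
      = -(((dZ v1 (x, η (x, t), t) + dX v2 (x, η (x, t), t)) * (-(eX η (x, t))))
          + (2 * dZ v2 (x, η (x, t), t) - pr (x, η (x, t), t)))
  kinematic_1 : ∀ x : ℝ, ∀ t ∈ Icc (0:ℝ) T, v1 (x, η (x, t), t) = 0
  kinematic_2 : ∀ x : ℝ, ∀ t ∈ Icc (0:ℝ) T, v2 (x, η (x, t), t) = eT η (x, t)
  noslip : ∀ x : ℝ, ∀ t ∈ Icc (0:ℝ) T, v1 (x, 0, t) = 0 ∧ v2 (x, 0, t) = 0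
  init_v : ∀ x z : ℝ, v1 (x, z, 0) = 0 ∧ v2 (x, z, 0) = 0
  init_ηt : ∀ x : ℝ, eT η (x, 0) = 0
  init_η : ∀ x : ℝ, η (x, 0) = η0 x
  init_η_pos : ∀ x : ℝ, 0 < η0 x

theorem hasDerivAt_param {F F' : ℝ → ℝ → ℝ} (hF : Continuous (Function.uncurry F))
    (hF' : Continuous (Function.uncurry F')) (h : ∀ a y, HasDerivAt (fun a => F a y) (F' a y) a)
    (a₀ : ℝ) (c d : ℝ) :
    HasDerivAt (fun a => ∫ y in c..d, F a y) (∫ y in c..d, F' a₀ y) a₀ := by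
  have hK : IsCompact ((Icc (a₀-1) (a₀+1)) ×ˢ (uIcc c d)) := isCompact_Icc.prod isCompact_uIcc
  obtain ⟨C, hC⟩ := hK.exists_bound_of_continuousOn hF'.continuousOn
  refine (intervalIntegral.hasDerivAt_integral_of_dominated_loc_of_deriv_le (s := Icc (a₀-1) (a₀+1))
    (bound := fun _ => C) (Icc_mem_nhds (by linarith) (by linarith)) ?_ ?_ ?_ ?_ ?_ ?_).2
  · refine Filter.Eventually.of_forall fun a => ?_
    have : Continuous (F a) := by fun_prop
    exact this.aestronglyMeasurable
  · have : Continuous (F a₀) := by fun_prop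
    exact this.intervalIntegrable _ _
  · have : Continuous (F' a₀) := by fun_prop
    exact this.aestronglyMeasurable
  · refine Filter.Eventually.of_forall fun y hy a ha => ?_
    exact hC (a, y) ⟨ha, uIoc_subset_uIcc hy⟩
  · exact intervalIntegrable_const
  · refine Filter.Eventually.of_forall fun y hy a ha => h a y

theorem leibniz {g : ℝ × ℝ → ℝ} (hg : ContDiff ℝ 1 g) {h h' : ℝ → ℝ}
    (hh : ∀ a, HasDerivAt h (h' a) a) (hh' : Continuous h') (a₀ : ℝ) :
    HasDerivAt (fun a => ∫ z in (0:ℝ)..h a, g (a, z))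
      ((∫ z in (0:ℝ)..h a₀, fderiv ℝ g (a₀, z) (1, 0)) + g (a₀, h a₀) * h' a₀) a₀ := by
  have hgc : Continuous g := hg.continuous
  have hhc : Continuous h := continuous_iff_continuousAt.2 fun a => (hh a).continuousAt
  have hfc : Continuous (fderiv ℝ g) := hg.continuous_fderiv (by norm_num)
  have key : ∀ a y, HasDerivAt (fun a => h a * g (a, h a * y))
      (h' a * g (a, h a * y) + h a * (fderiv ℝ g (a, h a * y) (1, h' a * y))) a := by
    intro a y
    have h1 : HasDerivAt (fun a => ((a, h a * y) : ℝ × ℝ)) (1, h' a * y) a :=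
      (hasDerivAt_id a).prodMk ((hh a).mul_const y)
    have h2 := ((hg.differentiable (by norm_num)) (a, h a * y)).hasFDerivAt.comp_hasDerivAt a h1
    exact (hh a).mul h2
  have h3 := hasDerivAt_param (F := fun a y => h a * g (a, h a * y))
    (F' := fun a y => h' a * g (a, h a * y) + h a * (fderiv ℝ g (a, h a * y) (1, h' a * y)))
    (by simp only [Function.uncurry_def]; fun_prop) (by simp only [Function.uncurry_def]; fun_prop) key a₀ 0 1
  have e1 : (fun a => ∫ z in (0:ℝ)..h a, g (a, z)) = fun a => ∫ y in (0:ℝ)..1, h a * g (a, h a * y) := by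
    funext a
    rw [intervalIntegral.integral_const_mul, intervalIntegral.mul_integral_comp_mul_left (f := fun z => g (a, z))]
    simp
  rw [e1]
  convert h3 using 1
  have e2 : (∫ z in (0:ℝ)..h a₀, fderiv ℝ g (a₀, z) (1, 0)) =
      ∫ y in (0:ℝ)..1, h a₀ * fderiv ℝ g (a₀, h a₀ * y) (1, 0) := by
    rw [intervalIntegral.integral_const_mul,
      intervalIntegral.mul_integral_comp_mul_left (f := fun z => fderiv ℝ g (a₀, z) (1, 0))]
    simp
  have e3 : g (a₀, h a₀) * h' a₀ = ∫ y in (0:ℝ)..1, (h' a₀ * g (a₀, h a₀ * y) +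
      h a₀ * (fderiv ℝ g (a₀, h a₀ * y) (0, h' a₀ * y))) := by
    rw [intervalIntegral.integral_eq_sub_of_hasDerivAt (f := fun y => h' a₀ * y * g (a₀, h a₀ * y))]
    · simp; ring
    · intro y _
      have h1 : HasDerivAt (fun y => ((a₀, h a₀ * y) : ℝ × ℝ)) (0, h a₀ * 1) y :=
        (hasDerivAt_const y a₀).prodMk ((hasDerivAt_id y).const_mul _)
      have h2 := ((hg.differentiable (by norm_num)) (a₀, h a₀ * y)).hasFDerivAt.comp_hasDerivAt y h1
      have h4 := ((hasDerivAt_id y).const_mul (h' a₀)).mul h2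
      refine h4.congr_deriv ?_
      have : ((0:ℝ), h' a₀ * y) = (h' a₀ * y) • ((0:ℝ), (1:ℝ)) := by simp
      have t2 : ((0:ℝ), h a₀ * 1) = (h a₀) • ((0:ℝ), (1:ℝ)) := by simp
      rw [this, t2, map_smul, map_smul]
      simp; ring
    · apply Continuous.intervalIntegrable; fun_prop
  rw [e2, e3, ← intervalIntegral.integral_add]
  · congr 1; funext y
    have : ((1:ℝ), h' a₀ * y) = (1, 0) + (0, h' a₀ * y) := by simp
    rw [this, map_add]; ring
  · apply Continuous.intervalIntegrable; fun_prop
  · apply Continuous.intervalIntegrable; fun_prop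

theorem poincare {g g' : ℝ → ℝ} (hg : ∀ z, HasDerivAt g (g' z) z) (hg' : Continuous g')
    (h0 : g 0 = 0) {h : ℝ} (hh : 0 ≤ h) :
    ∫ z in (0:ℝ)..h, g z ^ 2 ≤ h ^ 2 * ∫ z in (0:ℝ)..h, g' z ^ 2 := by
  have hgc : Continuous g := continuous_iff_continuousAt.2 fun a => (hg a).continuousAt
  have hi : ∀ a b, IntervalIntegrable (fun z => g' z ^ 2) volume a b :=
    fun a b => (by fun_prop : Continuous fun z => g' z ^ 2).intervalIntegrable _ _
  have h1 : ∀ z ∈ Icc 0 h, g z ^ 2 ≤ h * ∫ z in (0:ℝ)..h, g' z ^ 2 := by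
    intro z hz
    have e1 : ∫ y in (0:ℝ)..z, g' y = g z := by
      rw [integral_eq_sub_of_hasDerivAt (f := g) (fun y _ => hg y) (hg'.intervalIntegrable _ _), h0, sub_zero]
    have mono : ∫ y in (0:ℝ)..z, g' y ^ 2 ≤ ∫ y in (0:ℝ)..h, g' y ^ 2 := by
      rw [← integral_add_adjacent_intervals (hi 0 z) (hi z h)]
      have : 0 ≤ ∫ y in z..h, g' y ^ 2 := integral_nonneg hz.2 fun _ _ => sq_nonneg _
      linarith
    have nn : 0 ≤ ∫ y in (0:ℝ)..z, g' y ^ 2 := integral_nonneg hz.1 fun _ _ => sq_nonneg _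
    have cs : g z ^ 2 ≤ z * ∫ y in (0:ℝ)..z, g' y ^ 2 := by
      have p : 0 ≤ ∫ y in (0:ℝ)..z, (z * g' y - g z) ^ 2 := integral_nonneg hz.1 fun _ _ => sq_nonneg _
      have e : ∫ y in (0:ℝ)..z, (z * g' y - g z) ^ 2 = z ^ 2 * (∫ y in (0:ℝ)..z, g' y ^ 2) - z * g z ^ 2 := by
        have : ∀ y, (z * g' y - g z) ^ 2 = z ^ 2 * g' y ^ 2 - (2 * z * g z) * g' y + g z ^ 2 := fun y => by ring
        simp_rw [this]
        rw [intervalIntegral.integral_add, intervalIntegral.integral_sub, intervalIntegral.integral_const_mul, intervalIntegral.integral_const_mul, e1]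
        · simp; ring
        all_goals apply Continuous.intervalIntegrable; fun_prop
      rw [e] at p
      rcases hz.1.eq_or_lt with hz0 | hz0
      · rw [← hz0, h0]; simp
      · have : 0 ≤ z * (z * (∫ y in (0:ℝ)..z, g' y ^ 2) - g z ^ 2) := by linarith
        have := nonneg_of_mul_nonneg_right this hz0
        linarith
    exact cs.trans (mul_le_mul hz.2 mono nn hh)
  calc ∫ z in (0:ℝ)..h, g z ^ 2 ≤ ∫ z in (0:ℝ)..h, (h * ∫ z in (0:ℝ)..h, g' z ^ 2) :=
        integral_mono_on hh (by apply Continuous.intervalIntegrable; fun_prop) intervalIntegrable_const h1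
    _ = _ := by simp; ring

theorem region_integral {h : ℝ → ℝ} (hh : Continuous h) (hp : ∀ x, 0 < h x) {g : ℝ × ℝ → ℝ}
    (hg : Continuous g) :
    ∫ p in {p : ℝ × ℝ | p.1 ∈ Ioo (0:ℝ) 1 ∧ p.2 ∈ Ioo 0 (h p.1)}, g p =
      ∫ x in (0:ℝ)..1, ∫ z in (0:ℝ)..h x, g (x, z) := by
  set S := {p : ℝ × ℝ | p.1 ∈ Ioo (0:ℝ) 1 ∧ p.2 ∈ Ioo 0 (h p.1)} with hS
  have hSm : MeasurableSet S :=
    measurableSet_regionBetween (f := fun _ => (0:ℝ)) measurable_const hh.measurable measurableSet_Ioo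
  obtain ⟨M, hM⟩ := isCompact_Icc.exists_bound_of_continuousOn (s := Icc (0:ℝ) 1) hh.continuousOn
  have hsub : S ⊆ Icc 0 1 ×ˢ Icc 0 M := by
    rintro ⟨x, z⟩ ⟨h1, h2⟩
    refine ⟨Ioo_subset_Icc_self h1, h2.1.le, h2.2.le.trans ((le_abs_self _).trans (hM x (Ioo_subset_Icc_self h1)))⟩
  have hint : IntegrableOn g S :=
    (hg.continuousOn.integrableOn_compact (isCompact_Icc.prod isCompact_Icc)).mono_set hsub
  rw [← MeasureTheory.integral_indicator hSm, Measure.volume_eq_prod, integral_prod _ (by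
    rw [← Measure.volume_eq_prod]; exact (integrable_indicator_iff hSm).2 hint)]
  rw [integral_of_le zero_le_one, integral_Ioc_eq_integral_Ioo, ← MeasureTheory.integral_indicator measurableSet_Ioo]
  congr 1; funext x
  by_cases hx : x ∈ Ioo (0:ℝ) 1
  · rw [indicator_of_mem hx, integral_of_le (hp x).le, integral_Ioc_eq_integral_Ioo, ← MeasureTheory.integral_indicator measurableSet_Ioo]
    congr 1; funext z
    by_cases hz : z ∈ Ioo 0 (h x)
    · rw [indicator_of_mem hz, indicator_of_mem (show (x,z) ∈ S from ⟨hx, hz⟩)]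
    · rw [indicator_of_notMem hz, indicator_of_notMem (fun h => hz h.2)]
  · rw [indicator_of_notMem hx]
    have : ∀ z, S.indicator g (x, z) = 0 := fun z => indicator_of_notMem (fun h => hx h.1) _
    simp [this]

/-! ### Fields in three variables -/

theorem dX_smooth {f : ℝ × ℝ × ℝ → ℝ} (hf : ContDiff ℝ (⊤ : ℕ∞) f) : ContDiff ℝ (⊤ : ℕ∞) (dX f) :=
  (hf.fderiv_right (m := (⊤ : ℕ∞)) (by simp)).clm_apply contDiff_const
theorem dZ_smooth {f : ℝ × ℝ × ℝ → ℝ} (hf : ContDiff ℝ (⊤ : ℕ∞) f) : ContDiff ℝ (⊤ : ℕ∞) (dZ f) :=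
  (hf.fderiv_right (m := (⊤ : ℕ∞)) (by simp)).clm_apply contDiff_const
theorem dT_smooth {f : ℝ × ℝ × ℝ → ℝ} (hf : ContDiff ℝ (⊤ : ℕ∞) f) : ContDiff ℝ (⊤ : ℕ∞) (dT f) :=
  (hf.fderiv_right (m := (⊤ : ℕ∞)) (by simp)).clm_apply contDiff_const
theorem eX_smooth {f : ℝ × ℝ → ℝ} (hf : ContDiff ℝ (⊤ : ℕ∞) f) : ContDiff ℝ (⊤ : ℕ∞) (eX f) :=
  (hf.fderiv_right (m := (⊤ : ℕ∞)) (by simp)).clm_apply contDiff_const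
theorem eT_smooth {f : ℝ × ℝ → ℝ} (hf : ContDiff ℝ (⊤ : ℕ∞) f) : ContDiff ℝ (⊤ : ℕ∞) (eT f) :=
  (hf.fderiv_right (m := (⊤ : ℕ∞)) (by simp)).clm_apply contDiff_const

theorem top_diff {E : Type*} [NormedAddCommGroup E] [NormedSpace ℝ E] {f : E → ℝ}
    (hf : ContDiff ℝ (⊤ : ℕ∞) f) : Differentiable ℝ f := hf.differentiable (by simp)

theorem hasDerivAt_dX {f : ℝ × ℝ × ℝ → ℝ} (hf : ContDiff ℝ (⊤ : ℕ∞) f) (x z t : ℝ) :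
    HasDerivAt (fun x => f (x, z, t)) (dX f (x, z, t)) x :=
  (top_diff hf (x, z, t)).hasFDerivAt.comp_hasDerivAt x
    ((hasDerivAt_id x).prodMk ((hasDerivAt_const x z).prodMk (hasDerivAt_const x t)))
theorem hasDerivAt_dZ {f : ℝ × ℝ × ℝ → ℝ} (hf : ContDiff ℝ (⊤ : ℕ∞) f) (x z t : ℝ) :
    HasDerivAt (fun z => f (x, z, t)) (dZ f (x, z, t)) z :=
  (top_diff hf (x, z, t)).hasFDerivAt.comp_hasDerivAt z
    ((hasDerivAt_const z x).prodMk ((hasDerivAt_id z).prodMk (hasDerivAt_const z t)))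
theorem hasDerivAt_dT {f : ℝ × ℝ × ℝ → ℝ} (hf : ContDiff ℝ (⊤ : ℕ∞) f) (x z t : ℝ) :
    HasDerivAt (fun t => f (x, z, t)) (dT f (x, z, t)) t :=
  (top_diff hf (x, z, t)).hasFDerivAt.comp_hasDerivAt t
    ((hasDerivAt_const t x).prodMk ((hasDerivAt_const t z).prodMk (hasDerivAt_id t)))
theorem hasDerivAt_eX {f : ℝ × ℝ → ℝ} (hf : ContDiff ℝ (⊤ : ℕ∞) f) (x t : ℝ) :
    HasDerivAt (fun x => f (x, t)) (eX f (x, t)) x :=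
  (top_diff hf (x, t)).hasFDerivAt.comp_hasDerivAt x
    ((hasDerivAt_id x).prodMk (hasDerivAt_const x t))
theorem hasDerivAt_eT {f : ℝ × ℝ → ℝ} (hf : ContDiff ℝ (⊤ : ℕ∞) f) (x t : ℝ) :
    HasDerivAt (fun t => f (x, t)) (eT f (x, t)) t :=
  (top_diff hf (x, t)).hasFDerivAt.comp_hasDerivAt t
    ((hasDerivAt_const t x).prodMk (hasDerivAt_id t))

theorem fderiv_comm {E : Type*} [NormedAddCommGroup E] [NormedSpace ℝ E] {f : E → ℝ}
    (hf : ContDiff ℝ (⊤ : ℕ∞) f) (q u w : E) :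
    fderiv ℝ (fun q => fderiv ℝ f q u) q w = fderiv ℝ (fun q => fderiv ℝ f q w) q u := by
  have hd : DifferentiableAt ℝ (fderiv ℝ f) q :=
    (hf.fderiv_right (m := (⊤ : ℕ∞)) (by simp)).differentiable (by simp) q
  have h := (hf.contDiffAt (x := q)).isSymmSndFDerivAt
    (by simp only [minSmoothness_of_isRCLikeNormedField]; exact WithTop.coe_le_coe.2 (le_top : (2:ℕ∞) ≤ ⊤))
  have e : ∀ a b, fderiv ℝ (fun q => fderiv ℝ f q a) q b = fderiv ℝ (fderiv ℝ f) q b a := by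
    intro a b
    rw [fderiv_clm_apply hd (differentiableAt_const a)]
    simp
  rw [e, e, h.eq]

theorem dX_dZ {f : ℝ × ℝ × ℝ → ℝ} (hf : ContDiff ℝ (⊤ : ℕ∞) f) (q) : dX (dZ f) q = dZ (dX f) q :=
  fderiv_comm hf q _ _
theorem eT_eX {f : ℝ × ℝ → ℝ} (hf : ContDiff ℝ (⊤ : ℕ∞) f) : eT (eX f) = eX (eT f) :=
  funext fun q => fderiv_comm hf q _ _

theorem eX_periodic {f : ℝ × ℝ → ℝ} (hf : ContDiff ℝ (⊤ : ℕ∞) f)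
    (hp : ∀ x t, f (x + 1, t) = f (x, t)) (x t : ℝ) : eX f (x + 1, t) = eX f (x, t) := by
  have h1 := (hasDerivAt_eX hf (x + 1) t).comp_add_const x 1
  simp only [hp] at h1
  exact h1.unique (hasDerivAt_eX hf x t)
theorem eT_periodic {f : ℝ × ℝ → ℝ} (hf : ContDiff ℝ (⊤ : ℕ∞) f)
    (hp : ∀ x t, f (x + 1, t) = f (x, t)) (x t : ℝ) : eT f (x + 1, t) = eT f (x, t) := by
  have h1 := (hasDerivAt_eT hf (x + 1) t)
  simp only [hp] at h1
  exact h1.unique (hasDerivAt_eT hf x t)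
theorem dX_periodic {f : ℝ × ℝ × ℝ → ℝ} (hf : ContDiff ℝ (⊤ : ℕ∞) f)
    (hp : ∀ x z t, f (x + 1, z, t) = f (x, z, t)) (x z t : ℝ) :
    dX f (x + 1, z, t) = dX f (x, z, t) := by
  have h1 := (hasDerivAt_dX hf (x + 1) z t).comp_add_const x 1
  simp only [hp] at h1
  exact h1.unique (hasDerivAt_dX hf x z t)
theorem dZ_periodic {f : ℝ × ℝ × ℝ → ℝ} (hf : ContDiff ℝ (⊤ : ℕ∞) f)
    (hp : ∀ x z t, f (x + 1, z, t) = f (x, z, t)) (x z t : ℝ) :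
    dZ f (x + 1, z, t) = dZ f (x, z, t) := by
  have h1 := (hasDerivAt_dZ hf (x + 1) z t)
  simp only [hp] at h1
  exact h1.unique (hasDerivAt_dZ hf x z t)

/-- Leibniz in `x`. -/
theorem leibniz_X {g : ℝ × ℝ × ℝ → ℝ} (hg : ContDiff ℝ (⊤ : ℕ∞) g) {η : ℝ × ℝ → ℝ}
    (hη : ContDiff ℝ (⊤ : ℕ∞) η) (x t : ℝ) :
    HasDerivAt (fun x => ∫ z in (0:ℝ)..η (x, t), g (x, z, t))
      ((∫ z in (0:ℝ)..η (x, t), dX g (x, z, t)) + g (x, η (x, t), t) * eX η (x, t)) x := by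
  have hc : ContDiff ℝ (⊤ : ℕ∞) (fun p : ℝ × ℝ => g (p.1, p.2, t)) := by fun_prop
  have h := leibniz (g := fun p : ℝ × ℝ => g (p.1, p.2, t)) (hc.of_le (by simp))
    (h := fun x => η (x, t)) (fun a => hasDerivAt_eX hη a t)
    (by have := (eX_smooth hη).continuous; fun_prop) x
  refine h.congr_deriv ?_
  congr 2; funext z
  exact (hasDerivAt_eX hc x z).unique (hasDerivAt_dX hg x z t)

/-- Leibniz in `t`. -/
theorem leibniz_T {g : ℝ × ℝ × ℝ → ℝ} (hg : ContDiff ℝ (⊤ : ℕ∞) g) {η : ℝ × ℝ → ℝ}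
    (hη : ContDiff ℝ (⊤ : ℕ∞) η) (x t : ℝ) :
    HasDerivAt (fun t => ∫ z in (0:ℝ)..η (x, t), g (x, z, t))
      ((∫ z in (0:ℝ)..η (x, t), dT g (x, z, t)) + g (x, η (x, t), t) * eT η (x, t)) t := by
  have hc : ContDiff ℝ (⊤ : ℕ∞) (fun p : ℝ × ℝ => g (x, p.2, p.1)) := by fun_prop
  have h := leibniz (g := fun p : ℝ × ℝ => g (x, p.2, p.1)) (hc.of_le (by simp))
    (h := fun t => η (x, t)) (fun a => hasDerivAt_eT hη x a)
    (by have := (eT_smooth hη).continuous; fun_prop) t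
  refine h.congr_deriv ?_
  congr 2; funext z
  exact (hasDerivAt_eX hc t z).unique (hasDerivAt_dT hg x z t)

/-- continuity of integrals over the columns -/
theorem col_cont {g : ℝ × ℝ × ℝ → ℝ} (hg : Continuous g) {η : ℝ × ℝ → ℝ} (hη : Continuous η) :
    Continuous (fun p : ℝ × ℝ => ∫ z in (0:ℝ)..η p, g (p.1, z, p.2)) :=
  continuous_parametric_intervalIntegral_of_continuous (f := fun (p : ℝ × ℝ) z => g (p.1, z, p.2))
    (by simp only [Function.uncurry_def]; fun_prop) hη

/-- integral of an `x`-derivative of a periodic function vanishes -/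
theorem integral_periodic {F F' : ℝ → ℝ} (h : ∀ x, HasDerivAt F (F' x) x) (hc : Continuous F')
    (hp : ∀ x, F (x + 1) = F x) : ∫ x in (0:ℝ)..1, F' x = 0 := by
  rw [integral_eq_sub_of_hasDerivAt (f := F) (fun x _ => h x) (hc.intervalIntegrable _ _)]
  have := hp 0
  simp only [zero_add] at this
  rw [this, sub_self]

/-- the divergence theorem on the subgraph -/
theorem div_thm {P Q : ℝ × ℝ × ℝ → ℝ} (hP : ContDiff ℝ (⊤ : ℕ∞) P) (hQ : ContDiff ℝ (⊤ : ℕ∞) Q)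
    {η : ℝ × ℝ → ℝ} (hη : ContDiff ℝ (⊤ : ℕ∞) η)
    (pP : ∀ x z t, P (x + 1, z, t) = P (x, z, t)) (pη : ∀ x t, η (x + 1, t) = η (x, t)) (t : ℝ) :
    ∫ x in (0:ℝ)..1, ∫ z in (0:ℝ)..η (x, t), (dX P (x, z, t) + dZ Q (x, z, t)) =
      ∫ x in (0:ℝ)..1, (Q (x, η (x, t), t) - Q (x, 0, t) - P (x, η (x, t), t) * eX η (x, t)) := by
  have c1 := (dX_smooth hP).continuous
  have c2 := (dZ_smooth hQ).continuous
  have c3 := (eX_smooth hη).continuous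
  have c4 := hP.continuous
  have c5 := hQ.continuous
  have c6 := hη.continuous
  have k1 : Continuous (fun x : ℝ => ∫ z in (0:ℝ)..η (x, t), dX P (x, z, t)) :=
    (col_cont c1 c6).comp (by fun_prop : Continuous fun x : ℝ => (x, t))
  have h0 := integral_periodic (fun x => leibniz_X hP hη x t) (by fun_prop) (by simp [pP, pη])
  have e : ∀ x, ∫ z in (0:ℝ)..η (x, t), (dX P (x, z, t) + dZ Q (x, z, t)) =
      ((∫ z in (0:ℝ)..η (x, t), dX P (x, z, t)) + P (x, η (x, t), t) * eX η (x, t)) +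
      (Q (x, η (x, t), t) - Q (x, 0, t) - P (x, η (x, t), t) * eX η (x, t)) := by
    intro x
    rw [intervalIntegral.integral_add, integral_eq_sub_of_hasDerivAt (f := fun z => Q (x, z, t)) (f' := fun z => dZ Q (x, z, t)) (fun z _ => hasDerivAt_dZ hQ x z t)]
    · ring
    all_goals apply Continuous.intervalIntegrable; fun_prop
  simp_rw [e]
  rw [intervalIntegral.integral_add, h0, zero_add]
  all_goals apply Continuous.intervalIntegrable; fun_prop

/-- FTC in time and Fubini. -/
theorem time_int {Φ Φ' : ℝ × ℝ → ℝ} (h : ∀ x t, HasDerivAt (fun t => Φ (x, t)) (Φ' (x, t)) t)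
    (hc : Continuous Φ) (hc' : Continuous Φ') (t : ℝ) :
    (∫ x in (0:ℝ)..1, Φ (x, t)) = (∫ x in (0:ℝ)..1, Φ (x, 0)) +
      ∫ s in (0:ℝ)..t, ∫ x in (0:ℝ)..1, Φ' (x, s) := by
  rw [intervalIntegral_intervalIntegral_swap, ← intervalIntegral.integral_add]
  · congr 1; funext x
    rw [integral_eq_sub_of_hasDerivAt (f := fun t => Φ (x, t)) (fun s _ => h x s)]
    · ring
    · apply Continuous.intervalIntegrable; fun_prop
  · apply Continuous.intervalIntegrable; fun_prop
  · exact (continuous_parametric_intervalIntegral_of_continuous' (f := fun x s => Φ' (x, s)) (by simp only [Function.uncurry_def]; fun_prop) 0 t).intervalIntegrable _ _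
  · have : Continuous (Function.uncurry fun s x => Φ' (x, s)) := by
      simp only [Function.uncurry_def]; fun_prop
    exact (this.continuousOn.integrableOn_compact (isCompact_uIcc.prod isCompact_uIcc)).mono_set
      (prod_mono uIoc_subset_uIcc uIoc_subset_uIcc)

/-- the supremum of `η²` -/
theorem sup_cont {η : ℝ × ℝ → ℝ} (hη : Continuous η) :
    Continuous (fun s => ⨆ x : Icc (0:ℝ) 1, (η (x.1, s)) ^ 2) := by
  have := (isCompact_Icc (a := (0:ℝ)) (b := 1)).continuous_sSup (f := fun s x => η (x, s) ^ 2)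
    (by simp only [Function.HasUncurry.uncurry]; fun_prop)
  simpa only [sSup_image'] using this

theorem le_sup {η : ℝ × ℝ → ℝ} (hη : Continuous η) (s x : ℝ) (hx : x ∈ Icc (0:ℝ) 1) :
    η (x, s) ^ 2 ≤ ⨆ x : Icc (0:ℝ) 1, (η (x.1, s)) ^ 2 := by
  refine le_ciSup (f := fun x : Icc (0:ℝ) 1 => (η (x.1, s)) ^ 2) ?_ ⟨x, hx⟩
  have : Continuous (fun x : Icc (0:ℝ) 1 => (η (x.1, s)) ^ 2) := by fun_prop
  exact (isCompact_range this).bddAbove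

/-! ### The energy estimate -/

/-- squared norm of the symmetric gradient -/
def DD (v1 v2 : ℝ × ℝ × ℝ → ℝ) (q : ℝ × ℝ × ℝ) : ℝ :=
  (dX v1 q) ^ 2 + (dZ v2 q) ^ 2 + 2 * (((dZ v1 q + dX v2 q) / 2) ^ 2)

def fluxP (v1 v2 pr : ℝ × ℝ × ℝ → ℝ) (q : ℝ × ℝ × ℝ) : ℝ :=
  (2 * dX v1 q - pr q) * v1 q + (dZ v1 q + dX v2 q) * v2 q
    - v1 q * ((v1 q * v1 q + v2 q * v2 q) / 2) + v1 q * dZ v2 q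

def fluxQ (v1 v2 pr : ℝ × ℝ × ℝ → ℝ) (q : ℝ × ℝ × ℝ) : ℝ :=
  (dZ v1 q + dX v2 q) * v1 q + (2 * dZ v2 q - pr q) * v2 q
    - v2 q * ((v1 q * v1 q + v2 q * v2 q) / 2) - v1 q * dX v2 q

def kin (v1 v2 : ℝ × ℝ × ℝ → ℝ) (q : ℝ × ℝ × ℝ) : ℝ := (v1 q * v1 q + v2 q * v2 q) / 2

theorem fluxP_smooth {v1 v2 pr : ℝ × ℝ × ℝ → ℝ} (h1 : ContDiff ℝ (⊤ : ℕ∞) v1)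
    (h2 : ContDiff ℝ (⊤ : ℕ∞) v2) (h3 : ContDiff ℝ (⊤ : ℕ∞) pr) :
    ContDiff ℝ (⊤ : ℕ∞) (fluxP v1 v2 pr) := by
  have a1 := dX_smooth h1
  have a2 := dZ_smooth h1
  have a3 := dX_smooth h2
  have a4 := dZ_smooth h2
  unfold fluxP; fun_prop

theorem fluxQ_smooth {v1 v2 pr : ℝ × ℝ × ℝ → ℝ} (h1 : ContDiff ℝ (⊤ : ℕ∞) v1)
    (h2 : ContDiff ℝ (⊤ : ℕ∞) v2) (h3 : ContDiff ℝ (⊤ : ℕ∞) pr) :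
    ContDiff ℝ (⊤ : ℕ∞) (fluxQ v1 v2 pr) := by
  have a1 := dX_smooth h1
  have a2 := dZ_smooth h1
  have a3 := dX_smooth h2
  have a4 := dZ_smooth h2
  unfold fluxQ; fun_prop

theorem kin_smooth {v1 v2 : ℝ × ℝ × ℝ → ℝ} (h1 : ContDiff ℝ (⊤ : ℕ∞) v1)
    (h2 : ContDiff ℝ (⊤ : ℕ∞) v2) : ContDiff ℝ (⊤ : ℕ∞) (kin v1 v2) := by
  unfold kin; fun_prop

theorem DD_cont {v1 v2 : ℝ × ℝ × ℝ → ℝ} (h1 : ContDiff ℝ (⊤ : ℕ∞) v1)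
    (h2 : ContDiff ℝ (⊤ : ℕ∞) v2) : Continuous (DD v1 v2) := by
  have a1 := (dX_smooth h1).continuous
  have a2 := (dZ_smooth h1).continuous
  have a3 := (dX_smooth h2).continuous
  have a4 := (dZ_smooth h2).continuous
  unfold DD; fun_prop

theorem dT_kin {v1 v2 : ℝ × ℝ × ℝ → ℝ} (h1 : ContDiff ℝ (⊤ : ℕ∞) v1)
    (h2 : ContDiff ℝ (⊤ : ℕ∞) v2) (x z t : ℝ) :
    dT (kin v1 v2) (x, z, t) = v1 (x, z, t) * dT v1 (x, z, t) + v2 (x, z, t) * dT v2 (x, z, t) := by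
  have a1 := hasDerivAt_dT h1 x z t
  have a2 := hasDerivAt_dT h2 x z t
  have := (((a1.mul a1).add (a2.mul a2)).div_const 2).unique (hasDerivAt_dT (kin_smooth h1 h2) x z t)
  rw [← this]; ring

theorem dX_fluxP {v1 v2 pr : ℝ × ℝ × ℝ → ℝ} (h1 : ContDiff ℝ (⊤ : ℕ∞) v1)
    (h2 : ContDiff ℝ (⊤ : ℕ∞) v2) (h3 : ContDiff ℝ (⊤ : ℕ∞) pr) (x z t : ℝ) :
    dX (fluxP v1 v2 pr) (x, z, t) =
      dX (fun q => 2 * dX v1 q - pr q) (x, z, t) * v1 (x, z, t)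
      + (2 * dX v1 (x, z, t) - pr (x, z, t)) * dX v1 (x, z, t)
      + dX (fun q => dZ v1 q + dX v2 q) (x, z, t) * v2 (x, z, t)
      + (dZ v1 (x, z, t) + dX v2 (x, z, t)) * dX v2 (x, z, t)
      - dX v1 (x, z, t) * ((v1 (x, z, t) ^ 2 + v2 (x, z, t) ^ 2) / 2)
      - v1 (x, z, t) * (v1 (x, z, t) * dX v1 (x, z, t) + v2 (x, z, t) * dX v2 (x, z, t))
      + dX v1 (x, z, t) * dZ v2 (x, z, t) + v1 (x, z, t) * dX (dZ v2) (x, z, t) := by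
  have s1 := dX_smooth h1
  have s2 := dZ_smooth h1
  have s3 := dX_smooth h2
  have s4 := dZ_smooth h2
  have a1 := hasDerivAt_dX h1 x z t
  have a2 := hasDerivAt_dX h2 x z t
  have a3 := hasDerivAt_dX (f := fun q => 2 * dX v1 q - pr q) (by fun_prop) x z t
  have a4 := hasDerivAt_dX (f := fun q => dZ v1 q + dX v2 q) (by fun_prop) x z t
  have a5 := hasDerivAt_dX s4 x z t
  have := (((((a3.mul a1).add (a4.mul a2))).sub (a1.mul (((a1.mul a1).add (a2.mul a2)).div_const 2))).add
    (a1.mul a5)).unique (hasDerivAt_dX (fluxP_smooth h1 h2 h3) x z t)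
  rw [← this]
  simp only [Pi.mul_apply, Pi.add_apply]
  ring

theorem dZ_fluxQ {v1 v2 pr : ℝ × ℝ × ℝ → ℝ} (h1 : ContDiff ℝ (⊤ : ℕ∞) v1)
    (h2 : ContDiff ℝ (⊤ : ℕ∞) v2) (h3 : ContDiff ℝ (⊤ : ℕ∞) pr) (x z t : ℝ) :
    dZ (fluxQ v1 v2 pr) (x, z, t) =
      dZ (fun q => dZ v1 q + dX v2 q) (x, z, t) * v1 (x, z, t)
      + (dZ v1 (x, z, t) + dX v2 (x, z, t)) * dZ v1 (x, z, t)
      + dZ (fun q => 2 * dZ v2 q - pr q) (x, z, t) * v2 (x, z, t)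
      + (2 * dZ v2 (x, z, t) - pr (x, z, t)) * dZ v2 (x, z, t)
      - dZ v2 (x, z, t) * ((v1 (x, z, t) ^ 2 + v2 (x, z, t) ^ 2) / 2)
      - v2 (x, z, t) * (v1 (x, z, t) * dZ v1 (x, z, t) + v2 (x, z, t) * dZ v2 (x, z, t))
      - dZ v1 (x, z, t) * dX v2 (x, z, t) - v1 (x, z, t) * dZ (dX v2) (x, z, t) := by
  have s1 := dX_smooth h1
  have s2 := dZ_smooth h1
  have s3 := dX_smooth h2
  have s4 := dZ_smooth h2
  have a1 := hasDerivAt_dZ h1 x z t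
  have a2 := hasDerivAt_dZ h2 x z t
  have a3 := hasDerivAt_dZ (f := fun q => 2 * dZ v2 q - pr q) (by fun_prop) x z t
  have a4 := hasDerivAt_dZ (f := fun q => dZ v1 q + dX v2 q) (by fun_prop) x z t
  have a5 := hasDerivAt_dZ s3 x z t
  have := (((((a4.mul a1).add (a3.mul a2))).sub (a2.mul (((a1.mul a1).add (a2.mul a2)).div_const 2))).sub
    (a1.mul a5)).unique (hasDerivAt_dZ (fluxQ_smooth h1 h2 h3) x z t)
  rw [← this]
  simp only [Pi.mul_apply, Pi.add_apply]
  ring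

theorem young {f1 f2 a b K A : ℝ} (hA : 0 < A) (hf : f1 ^ 2 + f2 ^ 2 ≤ K ^ 2) :
    f1 * a + f2 * b ≤ A / 2 * K ^ 2 + (a ^ 2 + b ^ 2) / (2 * A) := by
  have e : A / 2 * (f1 ^ 2 + f2 ^ 2) + (a ^ 2 + b ^ 2) / (2 * A) - (f1 * a + f2 * b)
      = ((A * f1 - a) ^ 2 + (A * f2 - b) ^ 2) / (2 * A) := by
    field_simp; ring
  have : 0 ≤ ((A * f1 - a) ^ 2 + (A * f2 - b) ^ 2) / (2 * A) := by positivity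
  nlinarith

section
variable {ϱ δ β T K : ℝ} {f1 f2 v1 v2 pr : ℝ × ℝ × ℝ → ℝ} {η : ℝ × ℝ → ℝ} {η0 : ℝ → ℝ}

/-- The pointwise inequality. -/
theorem pointwise (S : IsClassicalFSISolution ϱ δ β T f1 f2 v1 v2 pr η η0)
    (hf : ∀ q : ℝ × ℝ × ℝ, f1 q ^ 2 + f2 q ^ 2 ≤ K ^ 2) {A : ℝ} (hA : 0 < A)
    {x z t : ℝ} (ht : t ∈ Ioo (0:ℝ) T) (hz : z ∈ Ioo 0 (η (x, t))) :
    dT (kin v1 v2) (x, z, t) + DD v1 v2 (x, z, t)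
      + 1 / 2 * (dZ v1 (x, z, t) ^ 2 + dZ v2 (x, z, t) ^ 2) ≤
    (dX (fluxP v1 v2 pr) (x, z, t) + dZ (fluxQ v1 v2 pr) (x, z, t))
      + (A / 2 * K ^ 2 + 1 / (2 * A) * (v1 (x, z, t) ^ 2 + v2 (x, z, t) ^ 2)) := by
  have m1 := S.momentum_1 x z t ht hz
  have m2 := S.momentum_2 x z t ht hz
  have m3 := S.incompressible x z t ht hz
  have y := young (a := v1 (x, z, t)) (b := v2 (x, z, t)) hA (hf (x, z, t))
  rw [dT_kin S.smooth_v1 S.smooth_v2, dX_fluxP S.smooth_v1 S.smooth_v2 S.smooth_pr,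
    dZ_fluxQ S.smooth_v1 S.smooth_v2 S.smooth_pr, dX_dZ S.smooth_v2]
  rw [← m1, ← m2] at y
  have e : 1 / (2 * A) * (v1 (x, z, t) ^ 2 + v2 (x, z, t) ^ 2) =
    (v1 (x, z, t) ^ 2 + v2 (x, z, t) ^ 2) / (2 * A) := by ring
  rw [e]
  unfold DD
  have hd : dZ v2 (x, z, t) = - dX v1 (x, z, t) := by linarith
  rw [hd] at y ⊢
  have := sq_nonneg (dX v2 (x, z, t))
  have := sq_nonneg (dX v1 (x, z, t))
  linarith

/-- Column inequality. -/
theorem column (S : IsClassicalFSISolution ϱ δ β T f1 f2 v1 v2 pr η η0)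
    (hf : ∀ q : ℝ × ℝ × ℝ, f1 q ^ 2 + f2 q ^ 2 ≤ K ^ 2) {A : ℝ} 
    {x t : ℝ} (ht : t ∈ Ioo (0:ℝ) T) (hA : η (x, t) ^ 2 ≤ A) :
    (∫ z in (0:ℝ)..η (x, t), dT (kin v1 v2) (x, z, t)) + (∫ z in (0:ℝ)..η (x, t), DD v1 v2 (x, z, t)) ≤
    (∫ z in (0:ℝ)..η (x, t), (dX (fluxP v1 v2 pr) (x, z, t) + dZ (fluxQ v1 v2 pr) (x, z, t)))
      + A / 2 * K ^ 2 * η (x, t) := by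
  have hη := S.η_pos x t (Ioo_subset_Icc_self ht)
  have hA0 : 0 < A := lt_of_lt_of_le (by positivity) hA
  have c1 := S.smooth_v1.continuous
  have c2 := S.smooth_v2.continuous
  have c3 := (dZ_smooth S.smooth_v1).continuous
  have c4 := (dZ_smooth S.smooth_v2).continuous
  have c5 := DD_cont S.smooth_v1 S.smooth_v2
  have c6 := (dT_smooth (kin_smooth S.smooth_v1 S.smooth_v2)).continuous
  have c7 := (dX_smooth (fluxP_smooth S.smooth_v1 S.smooth_v2 S.smooth_pr)).continuous
  have c8 := (dZ_smooth (fluxQ_smooth S.smooth_v1 S.smooth_v2 S.smooth_pr)).continuous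
  have main := integral_mono_on_of_le_Ioo (μ := volume) hη.le
    (by apply Continuous.intervalIntegrable; fun_prop)
    (by apply Continuous.intervalIntegrable; fun_prop)
    (fun z hz => pointwise S hf hA0 ht hz)
  rw [intervalIntegral.integral_add (by apply Continuous.intervalIntegrable; fun_prop)
      (by apply Continuous.intervalIntegrable; fun_prop),
    intervalIntegral.integral_add (by apply Continuous.intervalIntegrable; fun_prop)
      (by apply Continuous.intervalIntegrable; fun_prop),
    intervalIntegral.integral_const_mul,
    intervalIntegral.integral_add (by apply Continuous.intervalIntegrable; fun_prop)
      (by apply Continuous.intervalIntegrable; fun_prop),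
    intervalIntegral.integral_add
      (f := fun z => dX (fluxP v1 v2 pr) (x, z, t) + dZ (fluxQ v1 v2 pr) (x, z, t))
      (by apply Continuous.intervalIntegrable; fun_prop)
      (by apply Continuous.intervalIntegrable; fun_prop),
    intervalIntegral.integral_add
      (f := fun z => A / 2 * K ^ 2)
      (by apply Continuous.intervalIntegrable; fun_prop)
      (by apply Continuous.intervalIntegrable; fun_prop),
    intervalIntegral.integral_const, intervalIntegral.integral_const_mul,
    intervalIntegral.integral_add (f := fun z => v1 (x, z, t) ^ 2)
      (by apply Continuous.intervalIntegrable; fun_prop)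
      (by apply Continuous.intervalIntegrable; fun_prop)] at main
  have p1 := poincare (fun z => hasDerivAt_dZ S.smooth_v1 x z t) (by fun_prop)
    (S.noslip x t (Ioo_subset_Icc_self ht)).1 hη.le
  have p2 := poincare (fun z => hasDerivAt_dZ S.smooth_v2 x z t) (by fun_prop)
    (S.noslip x t (Ioo_subset_Icc_self ht)).2 hη.le
  have n1 : 0 ≤ ∫ z in (0:ℝ)..η (x, t), dZ v1 (x, z, t) ^ 2 :=
    integral_nonneg hη.le fun _ _ => sq_nonneg _
  have n2 : 0 ≤ ∫ z in (0:ℝ)..η (x, t), dZ v2 (x, z, t) ^ 2 :=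
    integral_nonneg hη.le fun _ _ => sq_nonneg _
  have q1 := p1.trans (mul_le_mul_of_nonneg_right hA n1)
  have q2 := p2.trans (mul_le_mul_of_nonneg_right hA n2)
  have q3 : 1 / (2 * A) * ((∫ z in (0:ℝ)..η (x, t), v1 (x, z, t) ^ 2) +
      ∫ z in (0:ℝ)..η (x, t), v2 (x, z, t) ^ 2) ≤
      1 / 2 * ((∫ z in (0:ℝ)..η (x, t), dZ v1 (x, z, t) ^ 2) +
      ∫ z in (0:ℝ)..η (x, t), dZ v2 (x, z, t) ^ 2) := by
    have := mul_le_mul_of_nonneg_left (add_le_add q1 q2) (by positivity : 0 ≤ 1 / (2 * A))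
    refine this.trans (le_of_eq ?_)
    field_simp
  simp only [sub_zero, smul_eq_mul] at main
  linarith

def Phi (ϱ β : ℝ) (v1 v2 : ℝ × ℝ × ℝ → ℝ) (η : ℝ × ℝ → ℝ) (p : ℝ × ℝ) : ℝ :=
  (∫ z in (0:ℝ)..η p, kin v1 v2 (p.1, z, p.2)) + (ϱ / 2 * eT η p ^ 2 + β / 2 * eX (eX η) p ^ 2)

def Phi' (ϱ β : ℝ) (v1 v2 : ℝ × ℝ × ℝ → ℝ) (η : ℝ × ℝ → ℝ) (p : ℝ × ℝ) : ℝ :=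
  (∫ z in (0:ℝ)..η p, dT (kin v1 v2) (p.1, z, p.2)) + (kin v1 v2 (p.1, η p, p.2) * eT η p
    + (ϱ * eT η p * eT (eT η) p + β * eX (eX η) p * eX (eX (eT η)) p))

theorem eT_eX_eX (hη : ContDiff ℝ (⊤ : ℕ∞) η) : eT (eX (eX η)) = eX (eX (eT η)) := by
  rw [eT_eX (eX_smooth hη), eT_eX hη]

theorem Phi_deriv (h1 : ContDiff ℝ (⊤ : ℕ∞) v1) (h2 : ContDiff ℝ (⊤ : ℕ∞) v2)
    (hη : ContDiff ℝ (⊤ : ℕ∞) η) (x t : ℝ) :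
    HasDerivAt (fun t => Phi ϱ β v1 v2 η (x, t)) (Phi' ϱ β v1 v2 η (x, t)) t := by
  have a := leibniz_T (kin_smooth h1 h2) hη x t
  have b := ((hasDerivAt_eT (eT_smooth hη) x t).pow 2).const_mul (ϱ / 2)
  have c := ((hasDerivAt_eT (eX_smooth (eX_smooth hη)) x t).pow 2).const_mul (β / 2)
  refine (a.add (b.add c)).congr_deriv ?_
  rw [eT_eX_eX hη]
  unfold Phi'
  push_cast
  ring

theorem Phi_cont (h1 : ContDiff ℝ (⊤ : ℕ∞) v1) (h2 : ContDiff ℝ (⊤ : ℕ∞) v2)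
    (hη : ContDiff ℝ (⊤ : ℕ∞) η) : Continuous (Phi ϱ β v1 v2 η) := by
  have a := col_cont (kin_smooth h1 h2).continuous hη.continuous
  have b := (eT_smooth hη).continuous
  have c := (eX_smooth (eX_smooth hη)).continuous
  unfold Phi
  exact a.add (by fun_prop)

theorem Phi'_cont (h1 : ContDiff ℝ (⊤ : ℕ∞) v1) (h2 : ContDiff ℝ (⊤ : ℕ∞) v2)
    (hη : ContDiff ℝ (⊤ : ℕ∞) η) : Continuous (Phi' ϱ β v1 v2 η) := by
  have a := col_cont (dT_smooth (kin_smooth h1 h2)).continuous hη.continuous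
  have b := (eT_smooth hη).continuous
  have b' := (eT_smooth (eT_smooth hη)).continuous
  have c := (eX_smooth (eX_smooth hη)).continuous
  have c' := (eX_smooth (eX_smooth (eT_smooth hη))).continuous
  have d := (kin_smooth h1 h2).continuous
  have e := hη.continuous
  unfold Phi'
  exact a.add (by fun_prop)

/-- Slice inequality. -/
theorem slice (S : IsClassicalFSISolution ϱ δ β T f1 f2 v1 v2 pr η η0)
    (hf : ∀ q : ℝ × ℝ × ℝ, f1 q ^ 2 + f2 q ^ 2 ≤ K ^ 2) {A : ℝ} 
    {t : ℝ} (ht : t ∈ Ioo (0:ℝ) T) (hA : ∀ x ∈ Icc (0:ℝ) 1, η (x, t) ^ 2 ≤ A) :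
    (∫ x in (0:ℝ)..1, Phi' ϱ β v1 v2 η (x, t)) +
      (∫ x in (0:ℝ)..1, ∫ z in (0:ℝ)..η (x, t), DD v1 v2 (x, z, t)) +
      δ * (∫ x in (0:ℝ)..1, eT (eX η) (x, t) ^ 2) ≤ A / 2 * K ^ 2 * ∫ x in (0:ℝ)..1, η (x, t) := by
  have htI := Ioo_subset_Icc_self ht
  have hη := S.smooth_η
  have sP := fluxP_smooth S.smooth_v1 S.smooth_v2 S.smooth_pr
  have sQ := fluxQ_smooth S.smooth_v1 S.smooth_v2 S.smooth_pr
  have sT := eT_smooth hη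
  have sX := eX_smooth hη
  have sXX := eX_smooth sX
  have sXXX := eX_smooth sXX
  have sTX := eX_smooth sT
  have cP := sP.continuous
  have cQ := sQ.continuous
  have ce := hη.continuous
  have cT := sT.continuous
  have cTT := (eT_smooth sT).continuous
  have cX := sX.continuous
  have cXX := sXX.continuous
  have cXXX := sXXX.continuous
  have cXXXX := (eX_smooth sXXX).continuous
  have cTX := sTX.continuous
  have cTXX := (eX_smooth sTX).continuous
  have ck := (kin_smooth S.smooth_v1 S.smooth_v2).continuous
  have cx : Continuous fun x : ℝ => (x, t) := by fun_prop
  have k1 : Continuous (fun x : ℝ => ∫ z in (0:ℝ)..η (x, t), DD v1 v2 (x, z, t)) :=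
    (col_cont (DD_cont S.smooth_v1 S.smooth_v2) ce).comp cx
  have k2 : Continuous (fun x : ℝ => ∫ z in (0:ℝ)..η (x, t),
      (dX (fluxP v1 v2 pr) (x, z, t) + dZ (fluxQ v1 v2 pr) (x, z, t))) :=
    (col_cont ((dX_smooth sP).continuous.add (dZ_smooth sQ).continuous) ce).comp cx
  have k3 : Continuous (fun x : ℝ => Phi' ϱ β v1 v2 η (x, t)) :=
    (Phi'_cont S.smooth_v1 S.smooth_v2 hη).comp cx
  rw [eT_eX hη]
  have pT := eT_periodic hη S.periodic_η
  have pTX := eX_periodic sT pT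
  have pX := eX_periodic hη S.periodic_η
  have pXX := eX_periodic sX pX
  have pXXX := eX_periodic sXX pXX
  have per : ∀ x z t, fluxP v1 v2 pr (x + 1, z, t) = fluxP v1 v2 pr (x, z, t) := by
    intro x z t
    unfold fluxP
    rw [S.periodic_v1, S.periodic_v2, S.periodic_pr, dX_periodic S.smooth_v1 S.periodic_v1,
      dZ_periodic S.smooth_v1 S.periodic_v1, dX_periodic S.smooth_v2 S.periodic_v2,
      dZ_periodic S.smooth_v2 S.periodic_v2]
  have hdiv := div_thm sP sQ hη per S.periodic_η t
  -- the exact derivative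
  have hR := integral_periodic
    (F := fun x => δ * (eT η (x, t) * eX (eT η) (x, t)) - β * (eT η (x, t) * eX (eX (eX η)) (x, t))
      + β * (eX (eX η) (x, t) * eX (eT η) (x, t)))
    (fun x => (((((hasDerivAt_eX sT x t).mul (hasDerivAt_eX sTX x t)).const_mul δ).sub
      (((hasDerivAt_eX sT x t).mul (hasDerivAt_eX sXXX x t)).const_mul β)).add
      (((hasDerivAt_eX sXX x t).mul (hasDerivAt_eX sTX x t)).const_mul β)))
    (by fun_prop) (fun x => by simp only [pT, pTX, pXX, pXXX])
  have step1 : (∫ x in (0:ℝ)..1, (Phi' ϱ β v1 v2 η (x, t) +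
      (∫ z in (0:ℝ)..η (x, t), DD v1 v2 (x, z, t)) + δ * eX (eT η) (x, t) ^ 2)) ≤
      ∫ x in (0:ℝ)..1, ((∫ z in (0:ℝ)..η (x, t),
      (dX (fluxP v1 v2 pr) (x, z, t) + dZ (fluxQ v1 v2 pr) (x, z, t))) +
      (A / 2 * K ^ 2 * η (x, t) + (kin v1 v2 (x, η (x, t), t) * eT η (x, t)
    + (ϱ * eT η (x, t) * eT (eT η) (x, t) + β * eX (eX η) (x, t) * eX (eX (eT η)) (x, t))
      + δ * eX (eT η) (x, t) ^ 2))) := by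
    refine integral_mono_on zero_le_one ?_ ?_ ?_
    · apply Continuous.intervalIntegrable; fun_prop
    · apply Continuous.intervalIntegrable; fun_prop
    · intro x hx
      have := column S hf ht (hA x hx)
      unfold Phi'
      linarith
  rw [intervalIntegral.integral_add (by apply Continuous.intervalIntegrable; fun_prop)
      (by apply Continuous.intervalIntegrable; fun_prop),
    intervalIntegral.integral_add (by apply Continuous.intervalIntegrable; fun_prop)
      (by apply Continuous.intervalIntegrable; fun_prop),
    intervalIntegral.integral_const_mul] at step1
  refine step1.trans (le_of_eq ?_)
  rw [intervalIntegral.integral_add (by apply Continuous.intervalIntegrable; fun_prop)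
      (by apply Continuous.intervalIntegrable; fun_prop), hdiv,
    ← intervalIntegral.integral_add (by apply Continuous.intervalIntegrable; fun_prop)
      (by apply Continuous.intervalIntegrable; fun_prop)]
  refine Eq.trans ?_ ((congrArg (fun r => A / 2 * K ^ 2 * (∫ x in (0:ℝ)..1, η (x, t)) + r) hR).trans
    (add_zero _))
  rw [← intervalIntegral.integral_const_mul,
    ← intervalIntegral.integral_add (by apply Continuous.intervalIntegrable; fun_prop)
      (by apply Continuous.intervalIntegrable; fun_prop)]
  congr 1; funext x
  have b1 := S.kinematic_1 x t htI
  have b2 := S.kinematic_2 x t htI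
  have b3 := S.noslip x t htI
  have b4 := S.plate x t ht
  unfold fluxP fluxQ kin
  simp only [b1, b2, b3.1, b3.2]
  linear_combination (eT η (x, t)) * b4

/-- Volume conservation. -/
theorem volume_cons (S : IsClassicalFSISolution ϱ δ β T f1 f2 v1 v2 pr η η0)
    {t : ℝ} (ht : t ∈ Ioo (0:ℝ) T) : ∫ x in (0:ℝ)..1, η (x, t) = ∫ x in (0:ℝ)..1, η0 x := by
  have sT := eT_smooth S.smooth_η
  rw [time_int (fun x t => hasDerivAt_eT S.smooth_η x t) S.smooth_η.continuous sT.continuous t]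
  simp only [S.init_η]
  have : ∫ s in (0:ℝ)..t, ∫ x in (0:ℝ)..1, eT η (x, s) = ∫ s in (0:ℝ)..t, 0 := by
    rw [integral_of_le ht.1.le, integral_of_le ht.1.le]
    refine setIntegral_congr_fun measurableSet_Ioc fun s hs => ?_
    have hs' : s ∈ Ioo (0:ℝ) T := ⟨hs.1, hs.2.trans_lt ht.2⟩
    have hd := div_thm S.smooth_v1 S.smooth_v2 S.smooth_η S.periodic_v1 S.periodic_η s
    have hsI := Ioo_subset_Icc_self hs'
    have l : ∀ x, ∫ z in (0:ℝ)..η (x, s), (dX v1 (x, z, s) + dZ v2 (x, z, s)) = 0 := by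
      intro x
      rw [integral_of_le (S.η_pos x s hsI).le, integral_Ioc_eq_integral_Ioo]
      exact setIntegral_eq_zero_of_forall_eq_zero fun z hz => S.incompressible x z s hs' hz
    simp only [l, S.kinematic_1 _ s hsI, S.kinematic_2 _ s hsI, (S.noslip _ s hsI).2] at hd
    simpa using hd.symm
  rw [this]; simp

end

/-- closed energy inequality (2.8).
There is an absolute constant `C₀ > 0` such that for every classical solution of the FSI
problem with bounded force (`|f| ≤ K`) and for every `t ∈ (0,T)`,
`(1/2)‖v(t)‖²_{L²(Ω_η(t))} + ∫₀ᵗ‖D(v)‖²_{L²(Ω_η(s))} + (ϱ/2)‖∂ₜη(t)‖²_{L²}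
 + δ∫₀ᵗ‖∂ₜ∂ₓη‖²_{L²} + (β/2)‖∂ₓ²η(t)‖²_{L²}
 ≤ (β/2)‖∂ₓ²η₀‖²_{L²} + C₀·K²·vol(Ω_{η₀})·∫₀ᵗ‖η(s)‖²_{L^∞(0,1)} ds`. -/
theorem stmt_7 :
    ∃ C₀ > (0:ℝ), ∀ T ϱ δ β K : ℝ, 0 < T → 0 < ϱ → 0 < δ → 0 < β → 0 ≤ K →
      ∀ (f1 f2 v1 v2 pr : ℝ × ℝ × ℝ → ℝ) (η : ℝ × ℝ → ℝ) (η0 : ℝ → ℝ),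
        IsClassicalFSISolution ϱ δ β T f1 f2 v1 v2 pr η η0 →
        (∀ q : ℝ × ℝ × ℝ, f1 q ^ 2 + f2 q ^ 2 ≤ K ^ 2) →
        ∀ t ∈ Ioo (0:ℝ) T,
          1 / 2 * (∫ p in {p : ℝ × ℝ | p.1 ∈ Ioo (0:ℝ) 1 ∧ p.2 ∈ Ioo 0 (η (p.1, t))},
              (v1 (p.1, p.2, t) ^ 2 + v2 (p.1, p.2, t) ^ 2))
          + (∫ s in (0:ℝ)..t,
              ∫ p in {p : ℝ × ℝ | p.1 ∈ Ioo (0:ℝ) 1 ∧ p.2 ∈ Ioo 0 (η (p.1, s))},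
                ((dX v1 (p.1, p.2, s)) ^ 2 + (dZ v2 (p.1, p.2, s)) ^ 2
                  + 2 * (((dZ v1 (p.1, p.2, s) + dX v2 (p.1, p.2, s)) / 2) ^ 2)))
          + ϱ / 2 * (∫ x in (0:ℝ)..1, (eT η (x, t)) ^ 2)
          + δ * (∫ s in (0:ℝ)..t, ∫ x in (0:ℝ)..1, (eT (eX η) (x, s)) ^ 2)
          + β / 2 * (∫ x in (0:ℝ)..1, (eX (eX η) (x, t)) ^ 2)
        ≤ β / 2 * (∫ x in (0:ℝ)..1, (deriv (deriv η0) x) ^ 2)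
          + C₀ * K ^ 2 * (∫ x in (0:ℝ)..1, η0 x)
              * ∫ s in (0:ℝ)..t, (⨆ x : Icc (0:ℝ) 1, (η (x.1, s)) ^ 2) := by
  refine ⟨1 / 2, by norm_num, ?_⟩
  intro T ϱ δ β K hT hϱ hδ hβ hK f1 f2 v1 v2 pr η η0 S hf t ht
  have hη := S.smooth_η
  have ce := hη.continuous
  have cη : ∀ s, Continuous fun x => η (x, s) := fun s => by fun_prop
  have hpos : ∀ s ∈ Icc 0 t, ∀ x, 0 < η (x, s) := fun s hs x =>
    S.η_pos x s ⟨hs.1, hs.2.trans ht.2.le⟩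
  have cv1 := S.smooth_v1.continuous
  have cv2 := S.smooth_v2.continuous
  have cD := DD_cont S.smooth_v1 S.smooth_v2
  have ck := (kin_smooth S.smooth_v1 S.smooth_v2).continuous
  have cT := (eT_smooth hη).continuous
  have cXX := (eX_smooth (eX_smooth hη)).continuous
  have cTX := (eT_smooth (eX_smooth hη)).continuous
  have htI : t ∈ Icc 0 t := ⟨ht.1.le, le_rfl⟩
  -- kinetic energy
  have E1 : 1 / 2 * (∫ p in {p : ℝ × ℝ | p.1 ∈ Ioo (0:ℝ) 1 ∧ p.2 ∈ Ioo 0 (η (p.1, t))},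
      (v1 (p.1, p.2, t) ^ 2 + v2 (p.1, p.2, t) ^ 2)) =
      ∫ x in (0:ℝ)..1, ∫ z in (0:ℝ)..η (x, t), kin v1 v2 (x, z, t) := by
    rw [← region_integral (g := fun p => kin v1 v2 (p.1, p.2, t)) (cη t) (hpos t htI) (by fun_prop),
      ← MeasureTheory.integral_const_mul]
    congr 1; funext p
    unfold kin; ring
  -- dissipation
  have E2 : (∫ s in (0:ℝ)..t,
      ∫ p in {p : ℝ × ℝ | p.1 ∈ Ioo (0:ℝ) 1 ∧ p.2 ∈ Ioo 0 (η (p.1, s))},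
        ((dX v1 (p.1, p.2, s)) ^ 2 + (dZ v2 (p.1, p.2, s)) ^ 2
          + 2 * (((dZ v1 (p.1, p.2, s) + dX v2 (p.1, p.2, s)) / 2) ^ 2))) =
      ∫ s in (0:ℝ)..t, ∫ x in (0:ℝ)..1, ∫ z in (0:ℝ)..η (x, s), DD v1 v2 (x, z, s) := by
    refine integral_congr fun s hs => ?_
    rw [uIcc_of_le ht.1.le] at hs
    exact region_integral (g := fun p => DD v1 v2 (p.1, p.2, s)) (cη s) (hpos s hs) (by fun_prop)
  have hPhi := time_int (Φ := Phi ϱ β v1 v2 η) (Φ' := Phi' ϱ β v1 v2 η)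
    (Phi_deriv S.smooth_v1 S.smooth_v2 hη) (Phi_cont S.smooth_v1 S.smooth_v2 hη)
    (Phi'_cont S.smooth_v1 S.smooth_v2 hη) t
  have hη0 : η0 = fun x => η (x, 0) := funext fun x => (S.init_η x).symm
  have hdd : ∀ x, deriv (deriv η0) x = eX (eX η) (x, 0) := by
    have h1 : deriv η0 = fun x => eX η (x, 0) := by
      rw [hη0]; exact funext fun x => (hasDerivAt_eX hη x 0).deriv
    intro x
    rw [h1]; exact (hasDerivAt_eX (eX_smooth hη) x 0).deriv
  have hP0 : ∫ x in (0:ℝ)..1, Phi ϱ β v1 v2 η (x, 0) =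
      β / 2 * (∫ x in (0:ℝ)..1, (deriv (deriv η0) x) ^ 2) := by
    rw [← intervalIntegral.integral_const_mul]
    congr 1; funext x
    rw [hdd]
    unfold Phi kin
    simp [(S.init_v _ _).1, (S.init_v _ _).2, S.init_ηt]
  have cc : Continuous fun x : ℝ => (x, t) := by fun_prop
  have kk : Continuous fun x : ℝ => ∫ z in (0:ℝ)..η (x, t), kin v1 v2 (x, z, t) :=
    (col_cont ck ce).comp cc
  have hPt : ∫ x in (0:ℝ)..1, Phi ϱ β v1 v2 η (x, t) =
      (∫ x in (0:ℝ)..1, ∫ z in (0:ℝ)..η (x, t), kin v1 v2 (x, z, t)) +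
      (ϱ / 2 * (∫ x in (0:ℝ)..1, (eT η (x, t)) ^ 2) +
        β / 2 * (∫ x in (0:ℝ)..1, (eX (eX η) (x, t)) ^ 2)) := by
    unfold Phi
    rw [intervalIntegral.integral_add (kk.intervalIntegrable _ _)
      (by apply Continuous.intervalIntegrable; fun_prop),
      intervalIntegral.integral_add (by apply Continuous.intervalIntegrable; fun_prop)
      (by apply Continuous.intervalIntegrable; fun_prop), intervalIntegral.integral_const_mul,
      intervalIntegral.integral_const_mul]
  -- time continuity of the slices
  have slc : ∀ G : ℝ × ℝ → ℝ, Continuous G → Continuous fun s => ∫ x in (0:ℝ)..1, G (x, s) :=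
    fun G hG => continuous_parametric_intervalIntegral_of_continuous'
      (f := fun s x => G (x, s)) (by simp only [Function.uncurry_def]; fun_prop) 0 1
  have i1 := slc _ (Phi'_cont (ϱ := ϱ) (β := β) S.smooth_v1 S.smooth_v2 hη)
  have i2 := slc _ (col_cont cD ce)
  have i3 := slc (fun p => eT (eX η) p ^ 2) (by fun_prop)
  have i4 := sup_cont ce
  have fin : ∫ s in (0:ℝ)..t, ((∫ x in (0:ℝ)..1, Phi' ϱ β v1 v2 η (x, s)) +
      (∫ x in (0:ℝ)..1, ∫ z in (0:ℝ)..η (x, s), DD v1 v2 (x, z, s)) +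
      δ * (∫ x in (0:ℝ)..1, eT (eX η) (x, s) ^ 2)) ≤
      ∫ s in (0:ℝ)..t, 1 / 2 * K ^ 2 * (∫ x in (0:ℝ)..1, η0 x) *
        (⨆ x : Icc (0:ℝ) 1, (η (x.1, s)) ^ 2) := by
    refine integral_mono_on_of_le_Ioo ht.1.le ?_ ?_ ?_
    · exact ((i1.add i2).add (i3.const_mul δ)).intervalIntegrable _ _
    · exact (i4.const_mul _).intervalIntegrable _ _
    · intro s hs
      have hs' : s ∈ Ioo (0:ℝ) T := ⟨hs.1, hs.2.trans ht.2⟩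
      have := slice S hf hs' (fun x hx => le_sup ce s x hx)
      rw [volume_cons S hs'] at this
      linarith
  rw [intervalIntegral.integral_add (by exact (i1.add i2).intervalIntegrable _ _)
      (by exact (i3.const_mul δ).intervalIntegrable _ _),
    intervalIntegral.integral_add (by exact i1.intervalIntegrable _ _) (by exact i2.intervalIntegrable _ _),
    intervalIntegral.integral_const_mul, intervalIntegral.integral_const_mul] at fin
  rw [E1, E2]
  rw [hPt, hP0] at hPhi
  linarith

end
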